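/- arXiv:1704.03158 — 6 statements merged into one kernel-verified Lean document; each statement's English description precedes it below -/
import Mathlib

section
/- Let d ≥ 1, let f : ℝ^d → ℝ^d satisfy f(0) = 0 and the local Lipschitz condition with nondecreasing constants L_R, and let h > 0. Then the modified truncated function f_h is globally Lipschitz with constant 3·L_h: for all x, x̄ ∈ ℝ^d, |f_h(x) − f_h(x̄)| ≤ 3·L_h·|x − x̄|. -/
open Set

/-- The modified truncated function `f_h`. -/
noncomputable def trunc {d : ℕ} (f : EuclideanSpace ℝ (Fin d) → EuclideanSpace ℝ (Fin d))
    (h : ℝ) (x : EuclideanSpace ℝ (Fin d)) : EuclideanSpace ℝ (Fin d) :=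
  if ‖x‖ ≤ h then f x else (‖x‖ / h) • f ((h / ‖x‖) • x)

theorem stmt0 {d : ℕ} (hd : 1 ≤ d)
    (f : EuclideanSpace ℝ (Fin d) → EuclideanSpace ℝ (Fin d)) (hf0 : f 0 = 0)
    (L : ℝ → ℝ) (hLpos : ∀ R > (0:ℝ), 0 < L R) (hLmono : MonotoneOn L (Set.Ioi 0))
    (hlip : ∀ R > (0:ℝ), ∀ x y : EuclideanSpace ℝ (Fin d), ‖x‖ ≤ R → ‖y‖ ≤ R →
      ‖f x - f y‖ ≤ L R * ‖x - y‖)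
    (h : ℝ) (hh : 0 < h) :
    ∀ x y : EuclideanSpace ℝ (Fin d),
      ‖trunc f h x - trunc f h y‖ ≤ 3 * L h * ‖x - y‖ := by
  have key : ∀ x : EuclideanSpace ℝ (Fin d),
      trunc f h x = (max ‖x‖ h / h) • f ((h / max ‖x‖ h) • x) := by
    intro x
    unfold trunc
    split_ifs with hx
    · rw [max_eq_right hx, div_self hh.ne', one_smul, one_smul]
    · rw [max_eq_left (not_le.mp hx).le]
  have hL := hLpos h hh
  have hin : ∀ x : EuclideanSpace ℝ (Fin d), ‖(h / max ‖x‖ h) • x‖ ≤ h := by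
    intro x
    have hr : 0 < max ‖x‖ h := lt_max_of_lt_right hh
    rw [norm_smul, Real.norm_of_nonneg (by positivity), div_mul_eq_mul_div, div_le_iff₀ hr]
    exact mul_le_mul_of_nonneg_left (le_max_left _ _) hh.le
  intro x y
  rw [key x, key y]
  have hx1 := hin x
  have hy1 := hin y
  have hr : 0 < max ‖x‖ h := lt_max_of_lt_right hh
  have hs : 0 < max ‖y‖ h := lt_max_of_lt_right hh
  have hxr : ‖x‖ ≤ max ‖x‖ h := le_max_left _ _
  have hrs : |max ‖x‖ h - max ‖y‖ h| ≤ ‖x - y‖ :=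
    (abs_max_sub_max_le_abs _ _ _).trans (abs_norm_sub_norm_le x y)
  generalize max ‖x‖ h = r at *
  generalize max ‖y‖ h = s at *
  have hfx : ‖f ((h / r) • x)‖ ≤ L h * h := by
    have := hlip h hh _ 0 hx1 (by simpa using hh.le)
    rw [hf0, sub_zero, sub_zero] at this
    exact this.trans (mul_le_mul_of_nonneg_left hx1 hL.le)
  have e : (r / h) • f ((h / r) • x) - (s / h) • f ((h / s) • y)
      = ((r - s) / h) • f ((h / r) • x)
        + (s / h) • (f ((h / r) • x) - f ((h / s) • y)) := by
    rw [sub_div, sub_smul, smul_sub]; abel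
  have h1 : ‖((r - s) / h) • f ((h / r) • x)‖ ≤ L h * ‖x - y‖ := by
    rw [norm_smul, Real.norm_eq_abs, abs_div, abs_of_pos hh]
    calc |r - s| / h * ‖f ((h / r) • x)‖ ≤ |r - s| / h * (L h * h) := by gcongr
      _ = L h * |r - s| := by field_simp
      _ ≤ _ := by gcongr
  have e2 : (s / h) • ((h / r) • x - (h / s) • y) = ((s - r) / r) • x + (x - y) := by
    rw [smul_sub, smul_smul, smul_smul, sub_div, sub_smul, div_self hr.ne', one_smul,
      show s / h * (h / r) = s / r by field_simp, show s / h * (h / s) = 1 by field_simp, one_smul]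
    abel
  have h3 : ‖((s - r) / r) • x‖ ≤ ‖x - y‖ := by
    rw [norm_smul, Real.norm_eq_abs, abs_div, abs_of_pos hr, abs_sub_comm, div_mul_eq_mul_div,
      div_le_iff₀ hr]
    exact mul_le_mul hrs hxr (norm_nonneg _) (norm_nonneg _)
  have h2 : ‖(s / h) • (f ((h / r) • x) - f ((h / s) • y))‖ ≤ L h * (2 * ‖x - y‖) := by
    have hn : ‖s / h‖ = s / h := Real.norm_of_nonneg (by positivity)
    calc _ = s / h * ‖f ((h / r) • x) - f ((h / s) • y)‖ := by rw [norm_smul, hn]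
      _ ≤ s / h * (L h * ‖(h / r) • x - (h / s) • y‖) := by
        gcongr
        exact hlip h hh _ _ hx1 hy1
      _ = L h * ‖(s / h) • ((h / r) • x - (h / s) • y)‖ := by rw [norm_smul _ (_ - _), hn]; ring
      _ ≤ _ := by
        rw [e2]
        gcongr
        have := norm_add_le (((s - r) / r) • x) (x - y)
        linarith
  rw [e]
  have := norm_add_le (((r - s) / h) • f ((h / r) • x))
    ((s / h) • (f ((h / r) • x) - f ((h / s) • y)))
  linarith
end

section
/- Let d ≥ 1, let f : ℝ^d → ℝ^d satisfy f(0) = 0 and the local Lipschitz condition with nondecreasing constants L_R, and let h > 0. Then for all x, x̄ ∈ ℝ^d with |x| > h and |x̄| > h, one has |(|x|/h)·f(h·x/|x|) − (|x̄|/h)·f(h·x̄/|x̄|)| ≤ 3·L_h·|x − x̄|. -/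
open Set

theorem stmt1 {d : ℕ} (hd : 1 ≤ d)
    (f : EuclideanSpace ℝ (Fin d) → EuclideanSpace ℝ (Fin d)) (hf0 : f 0 = 0)
    (L : ℝ → ℝ) (hLpos : ∀ R > (0:ℝ), 0 < L R) (hLmono : MonotoneOn L (Set.Ioi 0))
    (hlip : ∀ R > (0:ℝ), ∀ x y : EuclideanSpace ℝ (Fin d), ‖x‖ ≤ R → ‖y‖ ≤ R →
      ‖f x - f y‖ ≤ L R * ‖x - y‖)
    (h : ℝ) (hh : 0 < h) :
    ∀ x y : EuclideanSpace ℝ (Fin d), h < ‖x‖ → h < ‖y‖ →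
      ‖(‖x‖ / h) • f ((h / ‖x‖) • x) - (‖y‖ / h) • f ((h / ‖y‖) • y)‖ ≤ 3 * L h * ‖x - y‖ := by
  intro x y hx hy
  have hx0 : 0 < ‖x‖ := hh.trans hx
  have hy0 : 0 < ‖y‖ := hh.trans hy
  have hL := hLpos h hh
  have key : ∀ z : EuclideanSpace ℝ (Fin d), 0 < ‖z‖ → ‖(h / ‖z‖) • z‖ = h := by
    intro z hz
    rw [norm_smul, Real.norm_of_nonneg (by positivity)]
    field_simp
  have hab : |‖x‖ - ‖y‖| ≤ ‖x - y‖ := abs_norm_sub_norm_le x y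
  set u := (h / ‖x‖) • x with hu
  set v := (h / ‖y‖) • y with hv
  have hun : ‖u‖ = h := key x hx0
  have hvn : ‖v‖ = h := key y hy0
  have h1 : ‖f u - f v‖ ≤ L h * ‖u - v‖ := hlip h hh u v hun.le hvn.le
  have h2 : ‖f v‖ ≤ L h * h := by
    have := hlip h hh v 0 hvn.le (by simpa using hh.le)
    simpa [hf0, hvn] using this
  have h3 : (‖x‖ / h) * ‖u - v‖ ≤ 2 * ‖x - y‖ := by
    have e : (‖x‖ / h) • (u - v) = (x - y) + ((‖y‖ - ‖x‖) / ‖y‖) • y := by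
      have e1 : (‖x‖ / h) • u = x := by
        rw [hu, smul_smul, show ‖x‖ / h * (h / ‖x‖) = 1 by field_simp, one_smul]
      have e2 : (‖x‖ / h) • v = (‖x‖ / ‖y‖) • y := by
        rw [hv, smul_smul]; congr 1; field_simp
      rw [smul_sub, e1, e2, sub_div, div_self hy0.ne', sub_smul, one_smul]
      abel
    have e3 : ‖((‖y‖ - ‖x‖) / ‖y‖) • y‖ = |‖x‖ - ‖y‖| := by
      rw [norm_smul, Real.norm_eq_abs, abs_div, abs_of_pos hy0, abs_sub_comm]
      field_simp
    have e4 : (‖x‖ / h) * ‖u - v‖ = ‖(‖x‖ / h) • (u - v)‖ := by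
      rw [norm_smul, Real.norm_of_nonneg (by positivity)]
    rw [e4, e]
    refine (norm_add_le _ _).trans ?_
    rw [e3]; linarith
  have e : (‖x‖ / h) • f u - (‖y‖ / h) • f v
      = (‖x‖ / h) • (f u - f v) + ((‖x‖ - ‖y‖) / h) • f v := by
    rw [smul_sub, sub_div, sub_smul]; abel
  have h4 : ‖(‖x‖ / h) • (f u - f v)‖ ≤ L h * (2 * ‖x - y‖) := by
    rw [norm_smul, Real.norm_of_nonneg (by positivity)]
    calc ‖x‖ / h * ‖f u - f v‖ ≤ ‖x‖ / h * (L h * ‖u - v‖) := by gcongr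
      _ = L h * (‖x‖ / h * ‖u - v‖) := by ring
      _ ≤ _ := by gcongr
  have h5 : ‖((‖x‖ - ‖y‖) / h) • f v‖ ≤ L h * ‖x - y‖ := by
    rw [norm_smul, Real.norm_eq_abs, abs_div, abs_of_pos hh]
    calc |‖x‖ - ‖y‖| / h * ‖f v‖ ≤ ‖x - y‖ / h * (L h * h) := by gcongr
      _ = _ := by field_simp
  rw [e]
  refine (norm_add_le _ _).trans ?_
  linarith
end

section
/- Let d ≥ 1, let f : ℝ^d → ℝ^d satisfy f(0) = 0 and the local Lipschitz condition with nondecreasing constants L_R, and let h > 0. Then for all x, x̄ ∈ ℝ^d with |x| ≤ h < |x̄|, one has |f(x) − (|x̄|/h)·f(h·x̄/|x̄|)| ≤ 3·L_h·|x − x̄|. -/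
open Set

theorem stmt2 {d : ℕ} (hd : 1 ≤ d)
    (f : EuclideanSpace ℝ (Fin d) → EuclideanSpace ℝ (Fin d)) (hf0 : f 0 = 0)
    (L : ℝ → ℝ) (hLpos : ∀ R > (0:ℝ), 0 < L R) (hLmono : MonotoneOn L (Set.Ioi 0))
    (hlip : ∀ R > (0:ℝ), ∀ x y : EuclideanSpace ℝ (Fin d), ‖x‖ ≤ R → ‖y‖ ≤ R →
      ‖f x - f y‖ ≤ L R * ‖x - y‖)
    (h : ℝ) (hh : 0 < h) :
    ∀ x y : EuclideanSpace ℝ (Fin d), ‖x‖ ≤ h → h < ‖y‖ →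
      ‖f x - (‖y‖ / h) • f ((h / ‖y‖) • y)‖ ≤ 3 * L h * ‖x - y‖ := by
  intro x y hx hy
  have hy0 : 0 < ‖y‖ := hh.trans hy
  have hL := hLpos h hh
  have hxy : ‖y‖ - h ≤ ‖x - y‖ := by
    have := norm_sub_norm_le y x
    rw [norm_sub_rev] at this
    linarith
  obtain ⟨z, hz⟩ : ∃ z, z = (h / ‖y‖) • y := ⟨_, rfl⟩
  rw [← hz]
  have hzn : ‖z‖ = h := by
    rw [hz, norm_smul, Real.norm_of_nonneg (by positivity)]
    field_simp
  have hyz : ‖y - z‖ = ‖y‖ - h := by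
    have e : y - z = (1 - h / ‖y‖) • y := by rw [hz, sub_smul, one_smul]
    have h1 : h / ‖y‖ ≤ 1 := (div_le_one hy0).2 hy.le
    rw [e, norm_smul, Real.norm_of_nonneg (by linarith)]
    field_simp
  have h1 := hlip h hh x z hx hzn.le
  have h2 := hlip h hh z 0 hzn.le (by simpa using hh.le)
  rw [hf0, sub_zero, sub_zero, hzn] at h2
  have h3 : ‖x - z‖ ≤ 2 * ‖x - y‖ := by
    have := norm_sub_le_norm_sub_add_norm_sub x y z
    linarith
  have h4 : ‖(‖y‖ / h - 1) • f z‖ ≤ L h * ‖x - y‖ := by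
    have h5 : 0 ≤ ‖y‖ / h - 1 := by
      have := (one_le_div hh).2 hy.le
      linarith
    rw [norm_smul, Real.norm_of_nonneg h5]
    calc (‖y‖ / h - 1) * ‖f z‖ ≤ (‖y‖ / h - 1) * (L h * h) := by gcongr
      _ = L h * (‖y‖ - h) := by field_simp
      _ ≤ _ := by gcongr
  have e : f x - (‖y‖ / h) • f z = (f x - f z) - (‖y‖ / h - 1) • f z := by
    rw [sub_smul, one_smul]; abel
  rw [e]
  have h6 := norm_sub_le (f x - f z) ((‖y‖ / h - 1) • f z)
  have h7 : L h * ‖x - z‖ ≤ L h * (2 * ‖x - y‖) := by gcongr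
  linarith
end

section
/- Let d ≥ 1, let f, g : ℝ^d → ℝ^d, let p ∈ (0,1), and let λ > 0. If Φ_{f,g}(x) ≤ −λ for all x ≠ 0, then for every h > 0 the modified truncated functions satisfy the same bound: Φ_{f_h, g_h}(x) ≤ −λ for all x ≠ 0. -/
open Set
open scoped RealInnerProductSpace

/-- The dissipativity functional `Φ_{f,g}`. -/
noncomputable def Phi {d : ℕ} (f g : EuclideanSpace ℝ (Fin d) → EuclideanSpace ℝ (Fin d))
    (p : ℝ) (x : EuclideanSpace ℝ (Fin d)) : ℝ :=
  (⟪x, f x⟫ + (1 / 2) * ‖g x‖ ^ 2) / ‖x‖ ^ 2 + ((p - 2) / 2) * ⟪x, g x⟫ ^ 2 / ‖x‖ ^ 4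

theorem stmt7 {d : ℕ} (hd : 1 ≤ d)
    (f g : EuclideanSpace ℝ (Fin d) → EuclideanSpace ℝ (Fin d))
    (p lam : ℝ) (hp : p ∈ Set.Ioo (0:ℝ) 1) (hlam : 0 < lam)
    (hPhi : ∀ x : EuclideanSpace ℝ (Fin d), x ≠ 0 → Phi f g p x ≤ -lam) :
    ∀ h > (0:ℝ), ∀ x : EuclideanSpace ℝ (Fin d), x ≠ 0 →
      Phi (trunc f h) (trunc g h) p x ≤ -lam := by
  intro h hh x hx
  by_cases hxh : ‖x‖ ≤ h
  · simpa [Phi, trunc, hxh] using hPhi x hx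
  · have hr : 0 < ‖x‖ := norm_pos_iff.mpr hx
    have hr0 : ‖x‖ ≠ 0 := hr.ne'
    have hh0 : h ≠ 0 := ne_of_gt hh
    have hy : (h / ‖x‖) • x ≠ 0 := smul_ne_zero (div_ne_zero hh0 hr0) hx
    have key := hPhi _ hy
    have hn : ‖(h / ‖x‖) • x‖ = h := by
      rw [norm_smul, Real.norm_eq_abs, abs_of_pos (div_pos hh hr)]
      field_simp
    refine le_of_eq_of_le ?_ key
    unfold Phi
    simp only [trunc, if_neg hxh]
    rw [hn, norm_smul, Real.norm_eq_abs, abs_of_pos (div_pos hr hh)]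
    generalize hu : f ((h / ‖x‖) • x) = u
    generalize hv : g ((h / ‖x‖) • x) = v
    simp only [real_inner_smul_left, real_inner_smul_right]
    field_simp
end

section
/- Let p ∈ (0,1). Then for every real x ≥ −1, (1 + x)^{p/2} ≤ 1 + (p/2)·x + (p(p−2)/8)·x² + (p(p−2)(p−4)/48)·x³. -/
theorem bern_neg (s t : ℝ) (hs : s ≤ 0) (ht : 0 < t) : 1 + s * (t - 1) ≤ t ^ s := by
  have h1 : Real.log t ≤ t - 1 := Real.log_le_sub_one_of_pos ht
  have h2 : Real.log t * s + 1 ≤ Real.exp (Real.log t * s) := Real.add_one_le_exp _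
  rw [Real.rpow_def_of_pos ht]
  nlinarith

theorem aux_G (q : ℝ) (hq : q < 1) :
    MonotoneOn (fun t : ℝ => 1 + (q-1)*(t-1) + (q-1)*(q-2)/2*(t-1)^2 - t^(q-1)) (Set.Ioi 0) := by
  have hd : ∀ t ∈ Set.Ioi (0:ℝ), HasDerivAt
      (fun t : ℝ => 1 + (q-1)*(t-1) + (q-1)*(q-2)/2*(t-1)^2 - t^(q-1))
      ((q-1)*(1 + (q-2)*(t-1) - t^(q-2))) t := by
    intro t ht
    have h0 : HasDerivAt (fun t : ℝ => t - 1) 1 t := (hasDerivAt_id t).sub_const 1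
    have h1 := Real.hasDerivAt_rpow_const (x := t) (p := q-1) (Or.inl (ne_of_gt ht))
    have h2 := (((h0.const_mul (q-1)).const_add 1).add ((h0.pow 2).const_mul ((q-1)*(q-2)/2))).sub h1
    refine h2.congr_deriv ?_
    rw [show q - 1 - 1 = q - 2 by ring]
    norm_num
    ring
  apply monotoneOn_of_deriv_nonneg (convex_Ioi 0)
  · exact fun t ht => (hd t ht).continuousAt.continuousWithinAt
  · rw [interior_Ioi]
    exact fun t ht => (hd t ht).differentiableAt.differentiableWithinAt
  · rw [interior_Ioi]
    intro t ht
    rw [(hd t ht).deriv]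
    have := bern_neg (q-2) t (by linarith) ht
    nlinarith

theorem stmt9 (p : ℝ) (hp : p ∈ Set.Ioo (0:ℝ) 1) :
    ∀ x : ℝ, -1 ≤ x →
      (1 + x) ^ (p / 2) ≤ 1 + (p / 2) * x + (p * (p - 2) / 8) * x ^ 2
        + (p * (p - 2) * (p - 4) / 48) * x ^ 3 := by
  intro x hx
  obtain ⟨hp0, hp1⟩ := hp
  obtain ⟨q, rfl⟩ : ∃ q, p = 2 * q := ⟨p / 2, by ring⟩
  have hq : 0 < q := by linarith
  have hG := aux_G q (by linarith)
  rw [show 2 * q / 2 = q by ring]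
  let F : ℝ → ℝ := fun t => 1 + q*(t-1) + q*(q-1)/2*(t-1)^2 + q*(q-1)*(q-2)/6*(t-1)^3 - t^q
  have hd : ∀ t, 0 < t → HasDerivAt F
      (q*(1 + (q-1)*(t-1) + (q-1)*(q-2)/2*(t-1)^2 - t^(q-1))) t := by
    intro t ht
    have h0 : HasDerivAt (fun t : ℝ => t - 1) 1 t := (hasDerivAt_id t).sub_const 1
    have h1 := Real.hasDerivAt_rpow_const (x := t) (p := q) (Or.inl (ne_of_gt ht))
    have h2 := ((((h0.const_mul q).const_add 1).add ((h0.pow 2).const_mul (q*(q-1)/2))).add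
      ((h0.pow 3).const_mul (q*(q-1)*(q-2)/6))).sub h1
    refine h2.congr_deriv ?_
    norm_num
    ring
  have hc : Continuous F := by
    have : Continuous fun t : ℝ => t ^ q := Real.continuous_rpow_const hq.le
    fun_prop
  have hF1 : F 1 = 0 := by simp [F]
  have key : 0 ≤ F (1 + x) := by
    rw [← hF1]
    rcases le_total x 0 with h | h
    · have : AntitoneOn F (Set.Icc 0 1) := by
        apply antitoneOn_of_deriv_nonpos (convex_Icc 0 1) hc.continuousOn
        · rw [interior_Icc]
          exact fun t ht => (hd t ht.1).differentiableAt.differentiableWithinAt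
        · rw [interior_Icc]
          intro t ht
          rw [(hd t ht.1).deriv]
          have := hG (Set.mem_Ioi.2 ht.1) (Set.mem_Ioi.2 one_pos) ht.2.le
          refine mul_nonpos_of_nonneg_of_nonpos hq.le ?_
          simpa using this
      exact this ⟨by linarith, by linarith⟩ ⟨by norm_num, le_refl _⟩ (by linarith)
    · have : MonotoneOn F (Set.Ici 1) := by
        apply monotoneOn_of_deriv_nonneg (convex_Ici 1) hc.continuousOn
        · rw [interior_Ici]
          exact fun t ht => (hd t (one_pos.trans ht)).differentiableAt.differentiableWithinAt
        · rw [interior_Ici]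
          intro t ht
          rw [(hd t (one_pos.trans ht)).deriv]
          have := hG (Set.mem_Ioi.2 one_pos) (Set.mem_Ioi.2 (one_pos.trans ht)) (le_of_lt ht)
          refine mul_nonneg hq.le ?_
          simpa using this
      exact this (Set.mem_Ici.2 le_rfl) (Set.mem_Ici.2 (by linarith)) (by linarith)
  simp only [F, add_sub_cancel_left] at key
  linarith
end

section
/- Let d ≥ 1, let f, g : ℝ^d → ℝ^d satisfy f(0) = g(0) = 0 and the local Lipschitz condition with nondecreasing constants L_R, let p ∈ (0,1) and λ > 0 be such that Φ_{f,g}(x) ≤ −λ for all x ≠ 0, and let h : (0,Δ₀] → (0,∞) be decreasing with h(Δ) → ∞ and L_{h(Δ)}⁴·Δ → 0 as Δ → 0⁺. Then for every ε ∈ (0,λ) there exists Δ* ∈ (0,Δ₀] such that for every Δ ∈ (0,Δ*) and every initial value x₀ ∈ ℝ^d, the modified truncated Euler–Maruyama scheme X₀ = x₀, X_{k+1} = X_k + f_{h(Δ)}(X_k)·Δ + g_{h(Δ)}(X_k)·ξ_k driven by i.i.d. real Gaussian random variables ξ₀, ξ₁, … with mean 0 and variance Δ satisfies, for all k ≥ 0,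 E|X_k|^p ≤ |x₀|^p·(1 − p(λ−ε)Δ)^k ≤ |x₀|^p·e^{−p(λ−ε)kΔ}. -/
open Set Filter MeasureTheory ProbabilityTheory
open scoped RealInnerProductSpace ENNReal

lemma aux_mom (v : NNReal) :
   ∫ x, x ∂(gaussianReal 0 v) = 0 ∧ ∫ x, x^2 ∂(gaussianReal 0 v) = v ∧
   ∫ x, x^3 ∂(gaussianReal 0 v) = 0 ∧ ∫ x, x^4 ∂(gaussianReal 0 v) = 3 * v^2 ∧
   ∫ x, x^5 ∂(gaussianReal 0 v) = 0 ∧ ∫ x, x^6 ∂(gaussianReal 0 v) = 15 * v^3 := by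
  have key : ∀ n, ∫ x, x^n ∂(gaussianReal 0 v) = iteratedDeriv n (fun t => Real.exp (v * t^2/2)) 0 := by
    intro n
    have h := iteratedDeriv_mgf_zero (X := fun x : ℝ => x) (μ := gaussianReal 0 v) (by
      rw [show integrableExpSet (fun x : ℝ => x) (gaussianReal 0 v) = univ from ?_]
      · simp
      · ext t; simpa [integrableExpSet] using integrable_exp_mul_gaussianReal t) n
    rw [mgf_fun_id_gaussianReal] at h
    simp only [zero_mul, zero_add] at h
    rw [h]; simp
  have D : ∀ (P Q : ℝ → ℝ), (∀ t, HasDerivAt P (Q t - v * t * P t) t) →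
      deriv (fun t => P t * Real.exp (v * t^2/2)) = fun t => Q t * Real.exp (v * t^2/2) := by
    intro P Q h
    ext t
    have h2 : HasDerivAt (fun t : ℝ => Real.exp (v * t^2/2)) (Real.exp (v * t^2/2) * (v * t)) t := by
      apply HasDerivAt.exp
      refine HasDerivAt.congr_deriv (((hasDerivAt_pow 2 t).const_mul (v:ℝ)).div_const 2) ?_
      simp; ring
    refine (HasDerivAt.congr_deriv ((h t).mul h2) ?_).deriv
    ring
  have M : ∀ (t a b : ℝ) (n : ℕ), HasDerivAt (fun t : ℝ => a * t^n) (a * (n * t^(n-1))) t :=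
    fun t a b n => (hasDerivAt_pow n t).const_mul a
  have d0 : iteratedDeriv 0 (fun t => Real.exp (v * t^2/2)) = fun t => 1 * Real.exp (v * t^2/2) := by
    simp
  have d1 : iteratedDeriv 1 (fun t => Real.exp (v * t^2/2)) = fun t => (v * t^1) * Real.exp (v * t^2/2) := by
    rw [iteratedDeriv_succ, d0]
    exact D _ _ fun t => by refine HasDerivAt.congr_deriv (hasDerivAt_const t (1:ℝ)) ?_; simp; try ring
  have d2 : iteratedDeriv 2 (fun t => Real.exp (v * t^2/2)) = fun t => (v * t^0 + v^2*t^2) * Real.exp (v * t^2/2) := by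
    rw [iteratedDeriv_succ, d1]
    exact D _ _ fun t => by refine HasDerivAt.congr_deriv (M t v 0 1) ?_; simp; try ring
  have d3 : iteratedDeriv 3 (fun t => Real.exp (v * t^2/2)) = fun t => (3 * v^2 * t^1 + v^3*t^3) * Real.exp (v * t^2/2) := by
    rw [iteratedDeriv_succ, d2]
    exact D _ _ fun t => by refine HasDerivAt.congr_deriv ((M t v 0 0).add (M t (v^2) 0 2)) ?_; simp; try ring
  have d4 : iteratedDeriv 4 (fun t => Real.exp (v * t^2/2)) = fun t => (3 * v^2 * t^0 + 6*v^3*t^2 + v^4*t^4) * Real.exp (v * t^2/2) := by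
    rw [iteratedDeriv_succ, d3]
    exact D _ _ fun t => by refine HasDerivAt.congr_deriv ((M t (3*v^2) 0 1).add (M t (v^3) 0 3)) ?_; simp; try ring
  have d5 : iteratedDeriv 5 (fun t => Real.exp (v * t^2/2)) = fun t => (15 * v^3 * t^1 + 10*v^4*t^3 + v^5*t^5) * Real.exp (v * t^2/2) := by
    rw [iteratedDeriv_succ, d4]
    exact D _ _ fun t => by refine HasDerivAt.congr_deriv (((M t (3*v^2) 0 0).add (M t (6*v^3) 0 2)).add (M t (v^4) 0 4)) ?_; simp; try ring
  have d6 : iteratedDeriv 6 (fun t => Real.exp (v * t^2/2)) = fun t => (15 * v^3 + 45*v^4*t^2 + 15*v^5*t^4 + v^6*t^6) * Real.exp (v * t^2/2) := by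
    rw [iteratedDeriv_succ, d5]
    exact D _ _ fun t => by refine HasDerivAt.congr_deriv (((M t (15*v^3) 0 1).add (M t (10*v^4) 0 3)).add (M t (v^5) 0 5)) ?_; simp; try ring
  refine ⟨?_, ?_, ?_, ?_, ?_, ?_⟩
  · simpa [d1] using key 1
  · simpa [d2] using key 2
  · simpa [d3] using key 3
  · simpa [d4] using key 4
  · simpa [d5] using key 5
  · simpa [d6] using key 6

lemma aux_int (v : NNReal) (n : ℕ) : Integrable (fun x : ℝ => x^n) (gaussianReal 0 v) := by
  have := (memLp_id_gaussianReal (μ := 0) (v := v) n).integrable_norm_pow'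
  rw [← integrable_norm_iff (by fun_prop)]
  simpa using this

lemma aux_poly (v : NNReal) (c0 c1 c2 c3 c4 c5 c6 : ℝ) :
    Integrable (fun x : ℝ => c0 + c1 * x + c2 * x^2 + c3 * x^3 + c4 * x^4 + c5 * x^5 + c6 * x^6) (gaussianReal 0 v) ∧
    ∫ x, (c0 + c1 * x + c2 * x^2 + c3 * x^3 + c4 * x^4 + c5 * x^5 + c6 * x^6) ∂(gaussianReal 0 v)
      = c0 + c2 * v + 3 * c4 * v^2 + 15 * c6 * v^3 := by
  obtain ⟨h1, h2, h3, h4, h5, h6⟩ := aux_mom v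
  have i0 : Integrable (fun _ : ℝ => c0) (gaussianReal 0 v) := integrable_const _
  have i1 : Integrable (fun x : ℝ => c1 * x) (gaussianReal 0 v) := by
    simpa using (aux_int v 1).const_mul c1
  have i2 := (aux_int v 2).const_mul c2
  have i3 := (aux_int v 3).const_mul c3
  have i4 := (aux_int v 4).const_mul c4
  have i5 := (aux_int v 5).const_mul c5
  have i6 := (aux_int v 6).const_mul c6
  refine ⟨(((((i0.add i1).add i2).add i3).add i4).add i5).add i6, ?_⟩
  have j1 := i0.fun_add i1
  have j2 := j1.fun_add i2
  have j3 := j2.fun_add i3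
  have j4 := j3.fun_add i4
  have j5 := j4.fun_add i5
  rw [integral_add j5 i6, integral_add j4 i5, integral_add j3 i4, integral_add j2 i3,
    integral_add j1 i2, integral_add i0 i1]
  have h1' : ∫ x, c1 * x ∂(gaussianReal 0 v) = 0 := by rw [integral_const_mul, h1, mul_zero]
  rw [h1']
  simp only [integral_const_mul, h2, h3, h4, h5, h6]
  simp; ring

lemma aux_bern {t r : ℝ} (ht : 0 < t) (hr : r ≤ 0) : 1 + r * (t - 1) ≤ t ^ r := by
  rw [Real.rpow_def_of_pos ht]
  have h1 := Real.add_one_le_exp (Real.log t * r)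
  have h2 := Real.log_le_sub_one_of_pos ht
  nlinarith

lemma aux_taylor {q t : ℝ} (hq0 : 0 < q) (hq1 : q < 1) (ht : 0 ≤ t) :
    t ^ q ≤ 1 + q * (t-1) + q*(q-1)/2 * (t-1)^2 + q*(q-1)*(q-2)/6 * (t-1)^3 := by
  rcases ht.eq_or_lt with rfl | ht
  · rw [Real.zero_rpow hq0.ne']
    have : 1 + q * (0-1) + q*(q-1)/2 * (0-1)^2 + q*(q-1)*(q-2)/6 * (0-1)^3
      = (1-q) * (1 - q/2 - q*(2-q)/6) := by ring
    rw [this]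
    apply mul_nonneg <;> nlinarith
  let F : ℝ → ℝ := fun t => 1 + q * (t-1) + q*(q-1)/2 * (t-1)^2 + q*(q-1)*(q-2)/6 * (t-1)^3 - t^q
  let F' : ℝ → ℝ := fun t => q + q*(q-1) * (t-1) + q*(q-1)*(q-2)/2 * (t-1)^2 - q * t^(q-1)
  let F'' : ℝ → ℝ := fun t => q*(q-1) + q*(q-1)*(q-2) * (t-1) - q * ((q-1) * t^(q-1-1))
  have hS : ∀ t, HasDerivAt (fun t : ℝ => t - 1) 1 t := fun t => (hasDerivAt_id t).sub_const 1
  have hF : ∀ t > 0, HasDerivAt F (F' t) t := by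
    intro t ht
    refine HasDerivAt.congr_deriv (((((hS t).const_mul q).const_add 1).add (((hS t).pow 2).const_mul (q*(q-1)/2)) |>.add
      (((hS t).pow 3).const_mul (q*(q-1)*(q-2)/6))).sub (Real.hasDerivAt_rpow_const (p := q) (Or.inl ht.ne'))) ?_
    simp only [F']; push_cast; ring
  have hF' : ∀ t > 0, HasDerivAt F' (F'' t) t := by
    intro t ht
    refine HasDerivAt.congr_deriv (((((hS t).const_mul (q*(q-1))).const_add q).add (((hS t).pow 2).const_mul (q*(q-1)*(q-2)/2))).sub
      ((Real.hasDerivAt_rpow_const (p := q-1) (Or.inl ht.ne')).const_mul q)) ?_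
    simp only [F'']; push_cast; ring
  have hc : ConvexOn ℝ (Ioi 0) F := by
    apply convexOn_of_hasDerivWithinAt2_nonneg (convex_Ioi 0) (f' := F') (f'' := F'')
    · exact fun x hx => (hF x hx).continuousAt.continuousWithinAt
    · rw [interior_Ioi]; exact fun x hx => (hF x hx).hasDerivWithinAt
    · rw [interior_Ioi]; exact fun x hx => (hF' x hx).hasDerivWithinAt
    · rw [interior_Ioi]; intro x hx
      have := aux_bern (r := q-1-1) hx (by linarith)
      have e : F'' x = q*(1-q) * (x^(q-1-1) - (1 + (q-1-1)*(x-1))) := by simp only [F'']; ring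
      rw [e]
      exact mul_nonneg (mul_nonneg hq0.le (by linarith)) (by linarith)
  have h1 : HasDerivAt F 0 1 := by
    convert hF 1 one_pos using 1
    simp [F']
  have hF1 : F 1 = 0 := by simp [F]
  have : 0 ≤ F t := by
    rcases lt_trichotomy t 1 with h | h | h
    · have := hc.slope_le_of_hasDerivAt ht (mem_Ioi.2 one_pos) h h1
      rw [slope_def_field, hF1, div_nonpos_iff] at this
      rcases this with h | h <;> linarith [h.1, h.2]
    · rw [h, hF1]
    · have := hc.le_slope_of_hasDerivAt (mem_Ioi.2 one_pos) ht h h1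
      rw [slope_def_field, hF1, div_nonneg_iff] at this
      rcases this with h | h <;> linarith [h.1, h.2]
  simp only [F] at this; linarith

set_option maxHeartbeats 2000000 in
lemma aux_alg {q Δ M α β γ s C A B : ℝ} (hq0 : 0 < q) (hq1 : q < 1) (hΔ : 0 < Δ) (hM : 1 ≤ M)
    (hy : Δ * M^2 ≤ 1) (hα : |α| ≤ M) (hβ : |β| ≤ M) (hγ : |γ| ≤ M^2) (hs0 : 0 ≤ s) (hs : s ≤ M^2)
    (hC0 : 0 ≤ C) (hC : C ≤ M^2) (hA : A = 2*Δ*α + Δ^2*s) (hB : B = 2*(β + Δ*γ)) :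
    (1 + q*A + q*(q-1)/2*A^2 + q*(q-1)*(q-2)/6*A^3)
    + (q*C + q*(q-1)/2*(B^2+2*A*C) + q*(q-1)*(q-2)/6*(3*A^2*C+3*A*B^2)) * Δ
    + 3 * (q*(q-1)/2*C^2 + q*(q-1)*(q-2)/6*(3*A*C^2+3*B^2*C)) * Δ^2
    + 15 * (q*(q-1)*(q-2)/6*C^3) * Δ^3 ≤
    1 + 2*q*Δ*(α + C/2 + (q-1)*β^2) + 2*q*Δ*(68*(Δ*M^4)) := by
  obtain ⟨y, hyd⟩ : ∃ y, y = Δ * M^2 := ⟨_, rfl⟩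
  have hy0 : 0 < y := by rw [hyd]; positivity
  have hy1 : y ≤ 1 := hyd ▸ hy
  have hMM : M ≤ M^2 := by nlinarith
  have hy2 : y^2 = Δ^2*M^4 := by rw [hyd]; ring
  have hΔs0 : 0 ≤ Δ^2 * s := by positivity
  have hΔs : Δ^2 * s ≤ y^2 := by
    rw [hy2]; apply mul_le_mul_of_nonneg_left _ (by positivity)
    nlinarith
  have hΔα : |Δ * α| ≤ y := by
    rw [abs_mul, abs_of_pos hΔ, hyd]
    exact mul_le_mul_of_nonneg_left (hα.trans hMM) hΔ.le
  have hAabs : |A| ≤ 3 * y := by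
    rw [abs_le] at *
    constructor <;> nlinarith
  have hCΔ0 : 0 ≤ Δ * C := by positivity
  have hCΔ : Δ * C ≤ y := by rw [hyd]; exact mul_le_mul_of_nonneg_left hC hΔ.le
  have hBΔ0 : 0 ≤ Δ * B^2 := by positivity
  have hΔγ : |Δ * γ| ≤ M := by
    rw [abs_mul, abs_of_pos hΔ]
    calc Δ * |γ| ≤ Δ * M^2 := mul_le_mul_of_nonneg_left hγ hΔ.le
      _ ≤ M := by linarith
  have hBabs : |B| ≤ 4 * M := by
    rw [hB]
    rw [abs_le] at *
    constructor <;> linarith [hΔγ.1, hΔγ.2, hβ.1, hβ.2]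
  have hBsq : B^2 ≤ 16 * M^2 := by
    have := sq_le_sq' (by linarith [abs_le.1 hBabs]) (abs_le.1 hBabs).2
    linarith
  have hBΔ : Δ * B^2 ≤ 16 * y := by
    rw [hyd]; nlinarith
  have hβγ : |β * γ| ≤ M^4 := by
    rw [abs_mul]
    calc |β| * |γ| ≤ M^2 * M^2 := mul_le_mul (hβ.trans hMM) hγ (abs_nonneg _) (by positivity)
      _ = M^4 := by ring
  -- second moment
  have hE2 : 4*Δ*β^2 - 14*y^2 ≤ A^2 + (B^2 + 2*A*C)*Δ + 3 * C^2 * Δ^2 := by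
    have e1 : B^2 * Δ = 4*Δ*β^2 + 8*(Δ^2*(β*γ)) + 4*Δ^3*γ^2 := by rw [hB]; ring
    have e2 : -y^2 ≤ Δ^2*(β*γ) := by
      rw [hy2]; have := mul_le_mul_of_nonneg_left (abs_le.1 hβγ).1 (sq_nonneg Δ); linarith
    have e3 : -(3*y^2) ≤ A * (Δ*C) := by
      have : |A * (Δ * C)| ≤ 3*y*y := by
        rw [abs_mul, abs_of_nonneg hCΔ0]; exact mul_le_mul hAabs hCΔ hCΔ0 (by positivity)
      linarith [(abs_le.1 this).1]
    have e4 : 0 ≤ A^2 := sq_nonneg _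
    have e5 : 0 ≤ 3 * C^2 * Δ^2 := by positivity
    have e6 : 0 ≤ 4*Δ^3*γ^2 := by positivity
    linarith
  have hE3 : A^3 + (3*A^2*C+3*A*B^2)*Δ + 3*(3*A*C^2+3*B^2*C)*Δ^2 + 15*C^3*Δ^3 ≤ 384*y^2 := by
    have hA' : A ≤ 3*y := (abs_le.1 hAabs).2
    have hA2 : A^2 ≤ 9*y^2 := by
      have := sq_le_sq' (by linarith [abs_le.1 hAabs]) (abs_le.1 hAabs).2
      linarith
    have hy3 : y^3 ≤ y^2 := by nlinarith [sq_nonneg y]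
    have t1 : A^3 ≤ 27*y^3 := by
      nlinarith [mul_le_mul_of_nonneg_right hA' (sq_nonneg A), mul_le_mul_of_nonneg_right hA2 hy0.le]
    have t2 : A^2*(Δ*C) ≤ 9*y^2*y := mul_le_mul hA2 hCΔ hCΔ0 (by positivity)
    have t3 : A*(Δ*B^2) ≤ 3*y*(16*y) := 
      (mul_le_mul_of_nonneg_right hA' hBΔ0).trans (mul_le_mul_of_nonneg_left hBΔ (by positivity))
    have hC2 : (Δ*C)^2 ≤ y^2 := by gcongr
    have hC3 : (Δ*C)^3 ≤ y^3 := by gcongr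
    have t4 : A*(Δ*C)^2 ≤ 3*y*y^2 :=
      (mul_le_mul_of_nonneg_right hA' (sq_nonneg _)).trans (mul_le_mul_of_nonneg_left hC2 (by positivity))
    have t5 : (Δ*B^2)*(Δ*C) ≤ 16*y*y := mul_le_mul hBΔ hCΔ hCΔ0 (by positivity)
    linarith
  have hr2 : 0 ≤ q*(1-q)/2 := by have : 0 ≤ 1-q := by linarith
                                 positivity
  have hr2' : q*(1-q)/2 ≤ q/2 := by nlinarith
  have hr3 : 0 ≤ q*(q-1)*(q-2)/6 := by nlinarith [mul_pos hq0 (mul_pos (sub_pos.2 hq1) (sub_pos.2 (hq1.trans one_lt_two)))]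
  have hr3' : q*(q-1)*(q-2)/6 ≤ q/3 := by nlinarith [mul_pos hq0 hq0, mul_pos hq0 (sub_pos.2 hq1)]
  have f2 := mul_le_mul_of_nonneg_left hE2 hr2
  have f3 := mul_le_mul_of_nonneg_left hE3 hr3
  have f2' : q*(1-q)/2*(14*y^2) ≤ q/2*(14*y^2) := mul_le_mul_of_nonneg_right hr2' (by positivity)
  have f3' : q*(q-1)*(q-2)/6*(384*y^2) ≤ q/3*(384*y^2) := mul_le_mul_of_nonneg_right hr3' (by positivity)
  have f1 : q * (Δ^2*s) ≤ q * y^2 := mul_le_mul_of_nonneg_left hΔs hq0.le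
  have g0 : 2*q*Δ*(68*(Δ*M^4)) = 136 * (q*y^2) := by rw [hy2]; ring
  have g1 : q * A = q*(2*Δ*α) + q*(Δ^2*s) := by rw [hA]; ring
  rw [g0]
  linarith

lemma aux_step {E : Type*} [NormedAddCommGroup E] [InnerProductSpace ℝ E] (u a b : E)
    {p M Δ : ℝ} (hp0 : 0 < p) (hp1 : p < 1) (hu : ‖u‖ = 1) (hM : 1 ≤ M) (ha : ‖a‖ ≤ M) (hb : ‖b‖ ≤ M)
    (hΔ : 0 < Δ) (hy : Δ * M^2 ≤ 1) :
    ∫⁻ z, (‖u + Δ • a + z • b‖₊ : ℝ≥0∞)^p ∂(gaussianReal 0 (Real.toNNReal Δ)) ≤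
      ENNReal.ofReal (1 + p*Δ*(⟪u, a⟫ + (1/2) * ‖b‖^2 + (p-2)/2 * ⟪u, b⟫^2) + p*Δ*(68*(Δ*M^4))) := by
  set q := p/2 with hq
  set A := 2*Δ*⟪u, a⟫ + Δ^2*‖a‖^2 with hA
  set B := 2*(⟪u,b⟫ + Δ*⟪a,b⟫) with hB
  set C := ‖b‖^2 with hC
  have hn : ∀ z : ℝ, ‖u + Δ • a + z • b‖^2 = 1 + (A + B*z + C*z^2) := by
    intro z
    rw [norm_add_sq_real, norm_add_sq_real, norm_smul, norm_smul, inner_add_left, inner_smul_right,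
      inner_smul_right, inner_smul_right, real_inner_smul_left, hu, mul_pow, mul_pow]
    simp only [Real.norm_eq_abs, sq_abs, hA, hB, hC]
    ring
  let R : ℝ → ℝ := fun z =>
    (1 + q*A + q*(q-1)/2*A^2 + q*(q-1)*(q-2)/6*A^3)
    + (q*B + 2*(q*(q-1)/2)*A*B + 3*(q*(q-1)*(q-2)/6)*A^2*B) * z
    + (q*C + q*(q-1)/2*(B^2+2*A*C) + q*(q-1)*(q-2)/6*(3*A^2*C+3*A*B^2)) * z^2
    + (2*(q*(q-1)/2)*B*C + q*(q-1)*(q-2)/6*(B^3+6*A*B*C)) * z^3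
    + (q*(q-1)/2*C^2 + q*(q-1)*(q-2)/6*(3*A*C^2+3*B^2*C)) * z^4
    + (3*(q*(q-1)*(q-2)/6)*B*C^2) * z^5
    + (q*(q-1)*(q-2)/6*C^3) * z^6
  have hle : ∀ z : ℝ, ‖u + Δ • a + z • b‖^p ≤ R z := by
    intro z
    have h1 : ‖u + Δ • a + z • b‖^p = (1 + (A + B*z + C*z^2))^q := by
      rw [← hn, ← Real.rpow_natCast, ← Real.rpow_mul (norm_nonneg _)]
      congr 1; rw [hq]; push_cast; ring
    rw [h1]
    refine (aux_taylor (by linarith) (by linarith) (by rw [← hn]; positivity)).trans (le_of_eq ?_)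
    simp only [R]; ring
  have hR := aux_poly (Real.toNNReal Δ) (1 + q*A + q*(q-1)/2*A^2 + q*(q-1)*(q-2)/6*A^3)
    (q*B + 2*(q*(q-1)/2)*A*B + 3*(q*(q-1)*(q-2)/6)*A^2*B)
    (q*C + q*(q-1)/2*(B^2+2*A*C) + q*(q-1)*(q-2)/6*(3*A^2*C+3*A*B^2))
    (2*(q*(q-1)/2)*B*C + q*(q-1)*(q-2)/6*(B^3+6*A*B*C))
    (q*(q-1)/2*C^2 + q*(q-1)*(q-2)/6*(3*A*C^2+3*B^2*C))
    (3*(q*(q-1)*(q-2)/6)*B*C^2) (q*(q-1)*(q-2)/6*C^3)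
  rw [Real.coe_toNNReal _ hΔ.le] at hR
  have habs : ∀ v w : E, ‖v‖ ≤ M → ‖w‖ ≤ M → |⟪v, w⟫| ≤ M^2 := fun v w hv hw =>
    (abs_real_inner_le_norm v w).trans (by
      rw [sq]; exact mul_le_mul hv hw (norm_nonneg _) (by linarith))
  have habs' : ∀ w : E, ‖w‖ ≤ M → |⟪u, w⟫| ≤ M := fun w hw =>
    (abs_real_inner_le_norm u w).trans (by rw [hu, one_mul]; exact hw)
  have halg := aux_alg (q := q) (Δ := Δ) (M := M) (α := ⟪u,a⟫) (β := ⟪u,b⟫) (γ := ⟪a,b⟫) (s := ‖a‖^2) (C := C)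
    (A := A) (B := B) (by linarith) (by linarith) hΔ hM hy (habs' a ha) (habs' b hb) (habs a b ha hb)
    (by positivity) (by gcongr) (by positivity) (by rw [hC]; gcongr) hA hB
  calc ∫⁻ z, (‖u + Δ • a + z • b‖₊ : ℝ≥0∞)^p ∂(gaussianReal 0 (Real.toNNReal Δ))
      ≤ ∫⁻ z, ENNReal.ofReal (R z) ∂(gaussianReal 0 (Real.toNNReal Δ)) := by
        apply lintegral_mono
        intro z
        show (‖u + Δ • a + z • b‖₊ : ℝ≥0∞)^p ≤ ENNReal.ofReal (R z)
        rw [← enorm_eq_nnnorm, ← ofReal_norm, ENNReal.ofReal_rpow_of_nonneg (norm_nonneg _) hp0.le]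
        exact ENNReal.ofReal_le_ofReal (hle z)
    _ = ENNReal.ofReal (∫ z, R z ∂(gaussianReal 0 (Real.toNNReal Δ))) :=
        (ofReal_integral_eq_lintegral_ofReal hR.1
          (Eventually.of_forall fun z => (by positivity : (0:ℝ) ≤ ‖u + Δ • a + z • b‖^p).trans (hle z))).symm
    _ ≤ _ := by
        apply ENNReal.ofReal_le_ofReal
        rw [hR.2]
        have e : p = 2*q := by rw [hq]; ring
        rw [e]
        refine halg.trans (le_of_eq ?_)
        ring

lemma aux_bound {d : ℕ} {f : EuclideanSpace ℝ (Fin d) → EuclideanSpace ℝ (Fin d)} {h K : ℝ}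
    (hh : 0 < h) (hf : ∀ x, ‖x‖ ≤ h → ‖f x‖ ≤ K * ‖x‖) (x : EuclideanSpace ℝ (Fin d)) :
    ‖trunc f h x‖ ≤ K * ‖x‖ := by
  unfold trunc
  split_ifs with hx
  · exact hf x hx
  · push Not at hx
    have hx0 : 0 < ‖x‖ := hh.trans hx
    have hn : ‖(h / ‖x‖) • x‖ = h := by
      rw [norm_smul, Real.norm_of_nonneg (by positivity)]; field_simp
    have := hf _ hn.le
    rw [hn] at this
    rw [norm_smul, Real.norm_of_nonneg (by positivity)]
    calc ‖x‖ / h * ‖f ((h / ‖x‖) • x)‖ ≤ ‖x‖ / h * (K * h) := by gcongr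
      _ = K * ‖x‖ := by field_simp

lemma aux_Phi {d : ℕ} {f g : EuclideanSpace ℝ (Fin d) → EuclideanSpace ℝ (Fin d)} {h p lam : ℝ}
    (hh : 0 < h) (hPhi : ∀ x : EuclideanSpace ℝ (Fin d), x ≠ 0 → Phi f g p x ≤ -lam)
    (x : EuclideanSpace ℝ (Fin d)) (hx : x ≠ 0) :
    Phi (trunc f h) (trunc g h) p x ≤ -lam := by
  by_cases hxh : ‖x‖ ≤ h
  · simpa [Phi, trunc, hxh] using hPhi x hx
  · have hx0 : 0 < ‖x‖ := norm_pos_iff.2 hx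
    have hn : ‖(h / ‖x‖) • x‖ = h := by
      rw [norm_smul, Real.norm_of_nonneg (by positivity)]; field_simp
    refine le_trans (le_of_eq ?_) (hPhi ((h / ‖x‖) • x) (by rw [← norm_pos_iff, hn]; exact hh))
    unfold Phi
    rw [hn]
    simp only [trunc, hxh, if_false, real_inner_smul_left, inner_smul_right, norm_smul, Real.norm_eq_abs, abs_div, abs_of_pos hh, abs_norm]
    field_simp

lemma aux_step2 {d : ℕ} (x F G : EuclideanSpace ℝ (Fin d)) {p M Δ lam ε : ℝ} (hp0 : 0 < p) (hp1 : p < 1)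
    (hM : 1 ≤ M) (hF : ‖F‖ ≤ M * ‖x‖) (hG : ‖G‖ ≤ M * ‖x‖) (hΔ : 0 < Δ) (hy : Δ * M^2 ≤ 1)
    (hε : 68 * (Δ * M^4) ≤ ε)
    (hP : x ≠ 0 → (⟪x, F⟫ + (1 / 2) * ‖G‖ ^ 2) / ‖x‖ ^ 2 + ((p - 2) / 2) * ⟪x, G⟫ ^ 2 / ‖x‖ ^ 4 ≤ -lam) :
    ∫⁻ z, (‖x + Δ • F + z • G‖₊ : ℝ≥0∞)^p ∂(gaussianReal 0 (Real.toNNReal Δ)) ≤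
      ENNReal.ofReal (1 - p * (lam - ε) * Δ) * (‖x‖₊ : ℝ≥0∞)^p := by
  by_cases hx : x = 0
  · subst hx
    simp only [norm_zero, mul_zero, norm_le_zero_iff] at hF hG
    simp [hF, hG, hp0]
  have hx0 : 0 < ‖x‖ := norm_pos_iff.2 hx
  have hs : ∀ v : EuclideanSpace ℝ (Fin d), ‖‖x‖⁻¹ • v‖ = ‖v‖ / ‖x‖ := by
    intro v; rw [norm_smul, norm_inv, norm_norm]; field_simp
  have key := aux_step (‖x‖⁻¹ • x) (‖x‖⁻¹ • F) (‖x‖⁻¹ • G) hp0 hp1 (by rw [hs]; field_simp) hM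
    (by rw [hs, div_le_iff₀ hx0]; exact hF) (by rw [hs, div_le_iff₀ hx0]; exact hG) hΔ hy
  have e : ∀ z : ℝ, (‖x + Δ • F + z • G‖₊ : ℝ≥0∞)^p
      = (‖x‖₊ : ℝ≥0∞)^p * (‖‖x‖⁻¹ • x + Δ • (‖x‖⁻¹ • F) + z • (‖x‖⁻¹ • G)‖₊ : ℝ≥0∞)^p := by
    intro z
    rw [← ENNReal.mul_rpow_of_nonneg _ _ hp0.le, ← ENNReal.coe_mul]
    congr 2
    rw [← nnnorm_norm x, ← nnnorm_smul]
    congr 1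
    simp only [smul_add, smul_smul]
    congr 1
    · congr 1
      · rw [mul_inv_cancel₀ hx0.ne', one_smul]
      · congr 1; field_simp
    · congr 1; field_simp
  simp_rw [e]
  rw [lintegral_const_mul' _ _ (by simp [hp0.le]), mul_comm]
  gcongr
  refine key.trans (ENNReal.ofReal_le_ofReal ?_)
  have e2 : ⟪‖x‖⁻¹ • x, ‖x‖⁻¹ • F⟫ + (1/2) * ‖‖x‖⁻¹ • G‖^2 + (p-2)/2 * ⟪‖x‖⁻¹ • x, ‖x‖⁻¹ • G⟫^2
      = (⟪x, F⟫ + (1 / 2) * ‖G‖ ^ 2) / ‖x‖ ^ 2 + ((p - 2) / 2) * ⟪x, G⟫ ^ 2 / ‖x‖ ^ 4 := by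
    rw [hs]
    simp only [real_inner_smul_left, inner_smul_right]
    field_simp
  rw [e2]
  have hpΔ : 0 ≤ p * Δ := by positivity
  nlinarith [mul_le_mul_of_nonneg_left (hP hx) hpΔ, mul_le_mul_of_nonneg_left hε hpΔ]

lemma aux_cont {d : ℕ} {f : EuclideanSpace ℝ (Fin d) → EuclideanSpace ℝ (Fin d)} {L : ℝ → ℝ}
    (hL : ∀ R > (0:ℝ), ∀ x y : EuclideanSpace ℝ (Fin d), ‖x‖ ≤ R → ‖y‖ ≤ R →
      ‖f x - f y‖ ≤ L R * ‖x - y‖) : Continuous f := by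
  rw [continuous_iff_continuousAt]
  intro x
  have hR : 0 < ‖x‖ + 1 := by positivity
  rw [ContinuousAt, tendsto_iff_norm_sub_tendsto_zero]
  have hev : ∀ᶠ y in nhds x, ‖f y - f x‖ ≤ L (‖x‖+1) * ‖y - x‖ := by
    filter_upwards [Metric.ball_mem_nhds x one_pos] with y hy
    apply hL _ hR _ _ _ (by linarith)
    have := norm_le_norm_add_norm_sub' y x
    rw [Metric.mem_ball, dist_eq_norm] at hy
    linarith
  refine squeeze_zero' (Eventually.of_forall fun _ => norm_nonneg _) hev ?_
  have : ContinuousAt (fun y => L (‖x‖+1) * ‖y - x‖) x := by fun_prop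
  simpa [ContinuousAt] using this

lemma aux_meas {d : ℕ} {f : EuclideanSpace ℝ (Fin d) → EuclideanSpace ℝ (Fin d)} (h : ℝ)
    (hf : Measurable f) : Measurable (trunc f h) := by
  unfold trunc
  apply Measurable.ite
  · exact measurableSet_le measurable_norm measurable_const
  · exact hf
  · have : Measurable fun x : EuclideanSpace ℝ (Fin d) => f ((h / ‖x‖) • x) :=
      hf.comp (by fun_prop)
    fun_prop

lemma aux_indep {d : ℕ} {Ω : Type} [MeasurableSpace Ω] (P : Measure Ω) [IsProbabilityMeasure P]
    (ξ : ℕ → Ω → ℝ) (hm : ∀ k, Measurable (ξ k)) (hi : iIndepFun (m := fun _ => Real.measurableSpace) ξ P)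
    {S : EuclideanSpace ℝ (Fin d) → ℝ → EuclideanSpace ℝ (Fin d)}
    (hS : Measurable fun q : EuclideanSpace ℝ (Fin d) × ℝ => S q.1 q.2)
    (x₀ : EuclideanSpace ℝ (Fin d)) (X : ℕ → Ω → EuclideanSpace ℝ (Fin d))
    (h0 : ∀ ω, X 0 ω = x₀) (hX : ∀ k ω, X (k+1) ω = S (X k ω) (ξ k ω)) (k : ℕ) :
    Measurable (X k) ∧ IndepFun (X k) (ξ k) P := by
  have hψ : ∀ k, ∃ ψ : ((Finset.range k) → ℝ) → EuclideanSpace ℝ (Fin d), Measurable ψ ∧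
      ∀ ω, X k ω = ψ (fun i => ξ i ω) := by
    intro k
    induction k with
    | zero => exact ⟨fun _ => x₀, measurable_const, h0⟩
    | succ k ih =>
      obtain ⟨ψ, hψm, hψ⟩ := ih
      refine ⟨fun v => S (ψ fun i => v ⟨i, Finset.mem_range.2 ((Finset.mem_range.1 i.2).trans k.lt_succ_self)⟩)
        (v ⟨k, Finset.self_mem_range_succ k⟩), ?_, ?_⟩
      · apply hS.comp (Measurable.prodMk (hψm.comp ?_) (by fun_prop))
        exact measurable_pi_lambda _ fun i => measurable_pi_apply _
      · intro ω; rw [hX, hψ]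
  obtain ⟨ψ, hψm, hψ⟩ := hψ k
  have hXe : X k = ψ ∘ (fun ω (i : Finset.range k) => ξ i ω) := funext hψ
  refine ⟨?_, ?_⟩
  · rw [hXe]; exact hψm.comp (measurable_pi_lambda _ fun i => hm i)
  · have := hi.indepFun_finset (Finset.range k) {k} (by simp) hm
    rw [hXe]
    exact this.comp hψm (measurable_pi_apply (⟨k, by simp⟩ : ({k} : Finset ℕ)))

lemma aux_rec {d : ℕ} {Ω : Type} [MeasurableSpace Ω] (P : Measure Ω) [IsProbabilityMeasure P]
    (ξ : ℕ → Ω → ℝ) (hm : ∀ k, Measurable (ξ k)) (hi : iIndepFun (m := fun _ => Real.measurableSpace) ξ P)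
    {ν : Measure ℝ} [SFinite ν] (hν : ∀ k, Measure.map (ξ k) P = ν)
    {S : EuclideanSpace ℝ (Fin d) → ℝ → EuclideanSpace ℝ (Fin d)}
    (hS : Measurable fun q : EuclideanSpace ℝ (Fin d) × ℝ => S q.1 q.2)
    (x₀ : EuclideanSpace ℝ (Fin d)) (X : ℕ → Ω → EuclideanSpace ℝ (Fin d))
    (h0 : ∀ ω, X 0 ω = x₀) (hX : ∀ k ω, X (k+1) ω = S (X k ω) (ξ k ω)) (p : ℝ) (c : ℝ≥0∞)
    (hstep : ∀ x, ∫⁻ z, (‖S x z‖₊ : ℝ≥0∞)^p ∂ν ≤ c * (‖x‖₊ : ℝ≥0∞)^p) (k : ℕ) :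
    ∫⁻ ω, (‖X k ω‖₊ : ℝ≥0∞) ^ p ∂P ≤ (‖x₀‖₊ : ℝ≥0∞)^p * c^k := by
  induction k with
  | zero => simp [h0]
  | succ k ih =>
    obtain ⟨hXm, hind⟩ := aux_indep P ξ hm hi hS x₀ X h0 hX k
    have hprod := (indepFun_iff_map_prod_eq_prod_map_map hXm.aemeasurable (hm k).aemeasurable).1 hind
    have hφ : Measurable fun q : EuclideanSpace ℝ (Fin d) × ℝ => (‖S q.1 q.2‖₊ : ℝ≥0∞)^p := by
      fun_prop
    calc ∫⁻ ω, (‖X (k+1) ω‖₊ : ℝ≥0∞) ^ p ∂P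
        = ∫⁻ ω, (fun q : EuclideanSpace ℝ (Fin d) × ℝ => (‖S q.1 q.2‖₊ : ℝ≥0∞)^p) (X k ω, ξ k ω) ∂P := by
          simp only [hX]
      _ = ∫⁻ q, (‖S q.1 q.2‖₊ : ℝ≥0∞)^p ∂(P.map (fun ω => (X k ω, ξ k ω))) :=
          (lintegral_map hφ (hXm.prodMk (hm k))).symm
      _ = ∫⁻ x, ∫⁻ z, (‖S x z‖₊ : ℝ≥0∞)^p ∂ν ∂(P.map (X k)) := by
          rw [hprod, hν, lintegral_prod _ hφ.aemeasurable]
      _ ≤ ∫⁻ x, c * (‖x‖₊ : ℝ≥0∞)^p ∂(P.map (X k)) := lintegral_mono hstep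
      _ = c * ∫⁻ ω, (‖X k ω‖₊ : ℝ≥0∞)^p ∂P := by
          rw [lintegral_const_mul _ (by fun_prop), lintegral_map (by fun_prop) hXm]
      _ ≤ c * ((‖x₀‖₊ : ℝ≥0∞)^p * c^k) := by gcongr
      _ = _ := by ring

theorem stmt16 {d : ℕ} (hd : 1 ≤ d)
    (f g : EuclideanSpace ℝ (Fin d) → EuclideanSpace ℝ (Fin d))
    (hf0 : f 0 = 0) (hg0 : g 0 = 0)
    (L : ℝ → ℝ) (hLpos : ∀ R > (0:ℝ), 0 < L R) (hLmono : MonotoneOn L (Set.Ioi 0))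
    (hlip : ∀ R > (0:ℝ), ∀ x y : EuclideanSpace ℝ (Fin d), ‖x‖ ≤ R → ‖y‖ ≤ R →
      ‖f x - f y‖ ⊔ ‖g x - g y‖ ≤ L R * ‖x - y‖)
    (p lam : ℝ) (hp : p ∈ Set.Ioo (0:ℝ) 1) (hlam : 0 < lam)
    (hPhi : ∀ x : EuclideanSpace ℝ (Fin d), x ≠ 0 → Phi f g p x ≤ -lam)
    (Δ₀ : ℝ) (hΔ₀ : 0 < Δ₀) (h : ℝ → ℝ)
    (hhpos : ∀ Δ ∈ Set.Ioc (0:ℝ) Δ₀, 0 < h Δ)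
    (hhdec : AntitoneOn h (Set.Ioc 0 Δ₀))
    (hhinf : Tendsto h (nhdsWithin 0 (Set.Ioc 0 Δ₀)) atTop)
    (hLh : Tendsto (fun Δ => L (h Δ) ^ 4 * Δ) (nhdsWithin 0 (Set.Ioc 0 Δ₀)) (nhds 0)) :
    ∀ ε ∈ Set.Ioo 0 lam, ∃ Δs ∈ Set.Ioc (0:ℝ) Δ₀, ∀ Δ ∈ Set.Ioo (0:ℝ) Δs,
      ∀ (Ω : Type) [MeasurableSpace Ω] (P : Measure Ω) [IsProbabilityMeasure P]
        (ξ : ℕ → Ω → ℝ), (∀ k, Measurable (ξ k)) →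
        iIndepFun (m := fun _ => Real.measurableSpace) ξ P →
        (∀ k, Measure.map (ξ k) P = gaussianReal 0 (Real.toNNReal Δ)) →
        ∀ (x₀ : EuclideanSpace ℝ (Fin d)) (X : ℕ → Ω → EuclideanSpace ℝ (Fin d)),
        (∀ ω, X 0 ω = x₀) →
        (∀ k ω, X (k + 1) ω
            = X k ω + Δ • trunc f (h Δ) (X k ω) + ξ k ω • trunc g (h Δ) (X k ω)) →
        ∀ k : ℕ,
          (∫⁻ ω, (‖X k ω‖₊ : ℝ≥0∞) ^ p ∂P
              ≤ ENNReal.ofReal (‖x₀‖ ^ p * (1 - p * (lam - ε) * Δ) ^ k)) ∧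
          ‖x₀‖ ^ p * (1 - p * (lam - ε) * Δ) ^ k
              ≤ ‖x₀‖ ^ p * Real.exp (-(p * (lam - ε) * (k * Δ))) := by
  obtain ⟨hp0, hp1⟩ := hp
  rintro ε ⟨hε0, hεl⟩
  have hev : ∀ᶠ Δ in nhdsWithin 0 (Set.Ioc 0 Δ₀), L (h Δ) ^ 4 * Δ < min 1 (ε/68) :=
    hLh.eventually (gt_mem_nhds (by positivity))
  rw [eventually_nhdsWithin_iff, Metric.eventually_nhds_iff] at hev
  obtain ⟨δ, hδ, hev⟩ := hev
  refine ⟨min (min Δ₀ δ) (min (min 1 (ε/68)) (1/lam)), ⟨by positivity, (min_le_left _ _).trans (min_le_left _ _)⟩, ?_⟩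
  rintro Δ ⟨hΔ, hΔs⟩ Ω _ P _ ξ hm hi hν x₀ X h0 hX k
  simp only [lt_min_iff] at hΔs
  obtain ⟨⟨hΔ0, hΔδ⟩, ⟨hΔ1, hΔε⟩, hΔl⟩ := hΔs
  have hh := hhpos Δ ⟨hΔ, hΔ0.le⟩
  have hL4 := hev (by rw [dist_zero_right, Real.norm_of_nonneg hΔ.le]; exact hΔδ) ⟨hΔ, hΔ0.le⟩
  rw [lt_min_iff] at hL4
  have hLp := hLpos _ hh
  set M := max 1 (L (h Δ)) with hMd
  have hM : 1 ≤ M := le_max_left _ _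
  have hM4 : Δ * M^4 ≤ 1 ∧ 68 * (Δ * M^4) ≤ ε := by
    rcases max_choice 1 (L (h Δ)) with hc | hc <;> rw [hMd, hc] <;> constructor <;> linarith
  have hM2 : Δ * M^2 ≤ 1 := by
    have : M^2 ≤ M^4 := pow_le_pow_right₀ hM (by norm_num)
    nlinarith
  have hfL : ∀ R > (0:ℝ), ∀ x y : EuclideanSpace ℝ (Fin d), ‖x‖ ≤ R → ‖y‖ ≤ R →
      ‖f x - f y‖ ≤ L R * ‖x - y‖ := fun R hR x y hx hy => (le_max_left _ _).trans (hlip R hR x y hx hy)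
  have hgL : ∀ R > (0:ℝ), ∀ x y : EuclideanSpace ℝ (Fin d), ‖x‖ ≤ R → ‖y‖ ≤ R →
      ‖g x - g y‖ ≤ L R * ‖x - y‖ := fun R hR x y hx hy => (le_max_right _ _).trans (hlip R hR x y hx hy)
  have hfb : ∀ x : EuclideanSpace ℝ (Fin d), ‖x‖ ≤ h Δ → ‖f x‖ ≤ M * ‖x‖ := fun x hx => by
    have := hfL _ hh x 0 hx (by simpa using hh.le)
    rw [hf0, sub_zero, sub_zero] at this
    exact this.trans (mul_le_mul_of_nonneg_right (le_max_right _ _) (norm_nonneg _))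
  have hgb : ∀ x : EuclideanSpace ℝ (Fin d), ‖x‖ ≤ h Δ → ‖g x‖ ≤ M * ‖x‖ := fun x hx => by
    have := hgL _ hh x 0 hx (by simpa using hh.le)
    rw [hg0, sub_zero, sub_zero] at this
    exact this.trans (mul_le_mul_of_nonneg_right (le_max_right _ _) (norm_nonneg _))
  have hfm := aux_meas (h Δ) (aux_cont hfL).measurable
  have hgm := aux_meas (h Δ) (aux_cont hgL).measurable
  have hc0 : 0 ≤ 1 - p * (lam - ε) * Δ := by
    rw [lt_div_iff₀ hlam] at hΔl
    have h1 : p * (lam - ε) ≤ 1 * lam := mul_le_mul hp1.le (by linarith) (by linarith) zero_le_one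
    nlinarith
  have hrec := aux_rec P ξ hm hi hν
    (S := fun x z => x + Δ • trunc f (h Δ) x + z • trunc g (h Δ) x)
    (by fun_prop)
    x₀ X h0 hX p (ENNReal.ofReal (1 - p * (lam - ε) * Δ))
    (fun x => aux_step2 x _ _ hp0 hp1 hM (aux_bound hh hfb x) (aux_bound hh hgb x) hΔ hM2 hM4.2
      (fun hx => aux_Phi hh hPhi x hx)) k
  refine ⟨hrec.trans (le_of_eq ?_), ?_⟩
  · rw [ENNReal.ofReal_mul (by positivity), ENNReal.ofReal_pow hc0, ← enorm_eq_nnnorm, ← ofReal_norm,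
      ENNReal.ofReal_rpow_of_nonneg (norm_nonneg _) hp0.le]
  · apply mul_le_mul_of_nonneg_left _ (by positivity)
    have h1 : 1 - p * (lam - ε) * Δ ≤ Real.exp (-(p * (lam - ε) * Δ)) := by
      have := Real.add_one_le_exp (-(p * (lam - ε) * Δ)); linarith
    calc (1 - p * (lam - ε) * Δ)^k ≤ (Real.exp (-(p * (lam - ε) * Δ)))^k := pow_le_pow_left₀ hc0 h1 k
      _ = _ := by rw [← Real.exp_nat_mul]; congr 1; ring
end
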